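/- Let G be a simple graph, let S be a nonempty co-vertex cover of G, and let C = V(G) \ S with |C| > 2|S|. If G has a cycle cover of size at most r, then there exists a set C' ⊆ C with |C'| ≤ 2|S| such that the induced subgraph G' = G[S ∪ C'] admits a cycle-path cover of S in G' with C'-endpoints containing at most r − 1 cycles. -/

import Mathlib

/-- `G` has a cycle cover of size at most `r`: a set of at most `r` pairwise vertex-disjoint
cycles (single vertices counting as trivial cycles) such that every vertex of `G` belongs to
exactly one cycle of the set. -/
def HasCycleCoverLE {V : Type*} [Fintype V] (G : SimpleGraph V) (r : ℕ) : Prop :=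
  ∃ P : Finset (Finset V), P.card ≤ r ∧
    (∀ v : V, ∃! p, p ∈ P ∧ v ∈ p) ∧
    ∀ p ∈ P, (∃ x, p = {x}) ∨
      ∃ a : V, ∃ c : G.Walk a a, c.IsCycle ∧ ∀ x, x ∈ p ↔ x ∈ c.support

/-- `G` has a cycle-path cover of `S` with `C`-endpoints containing at most `m` cycles: a set
`L` of pairwise vertex-disjoint simple paths and cycles (single vertices counting as trivial
cycles) such that every vertex of `S` belongs to exactly one element of `L`, the endpoints of
every path of `L` belong to `C`, and the set `Lc` of cycles of `L` has at most `m`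
elements. -/
def HasCyclePathCover {V : Type*} (G : SimpleGraph V) (S C : Set V) (m : ℕ) : Prop :=
  ∃ L Lc : Finset (Finset V), Lc ⊆ L ∧
    (∀ p ∈ L, ∀ q ∈ L, p ≠ q → ∀ x, x ∈ p → x ∉ q) ∧
    (∀ v, v ∈ S → ∃ p ∈ L, v ∈ p) ∧
    (∀ p ∈ Lc, (∃ x, p = {x}) ∨
      ∃ a : V, ∃ c : G.Walk a a, c.IsCycle ∧ ∀ x, x ∈ p ↔ x ∈ c.support) ∧
    (∀ p ∈ L, p ∉ Lc → ∃ a b : V, ∃ w : G.Walk a b, w.IsPath ∧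
      (∀ x, x ∈ p ↔ x ∈ w.support) ∧ a ∈ C ∧ b ∈ C) ∧
    Lc.card ≤ m

/-!
Call a cycle `p` of the cover light if `|p \ S| ≤ 2 |p ∩ S|` and heavy otherwise; since
`|V \ S| > 2 |S|`, some cycle is heavy. Cycles disjoint from `S` are dropped and light cycles are
kept. On a heavy cycle, the vertices of `S` have at most `2 |p ∩ S|` neighbours, so some vertex
`z ∉ S` is not one of them. Cut the cycle open at `z` and keep only `p ∩ S` and its neighbours along
the cycle: whatever is deleted lies between two vertices outside `S`, which are adjacent in the
clique, so a path with both endpoints outside `S` remains.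
-/

section ClosedNeighborhood

variable {V : Type*} {G H : SimpleGraph V} {S : Set V} {u v : V}

/-- The closed neighbourhood `N_H[S]`: the vertices of `S` together with their neighbours in `H`.
With `H` a cycle, these are the vertices kept when the cycle is pruned to a path. -/
def closedNeighborhood (H : SimpleGraph V) (S : Set V) : Set V :=
  {v | v ∈ S ∨ ∃ s ∈ S, H.Adj s v}

theorem notMem_of_adj_notMem_closedNeighborhood (huv : H.Adj u v)
    (hv : v ∉ closedNeighborhood H S) : u ∉ S :=
  fun hu => hv (Or.inr ⟨u, hu, huv⟩)

theorem notMem_of_isChain_append_cons {x : V} {l₁ l₂ : List V}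
    (hchain : (l₁ ++ x :: l₂).IsChain H.Adj) (hne : l₁ ≠ [])
    (hl₁ : ∀ y ∈ l₁, y ∉ closedNeighborhood H S) : x ∉ S := by
  have hadj : H.Adj (l₁.getLast hne) x :=
    (List.isChain_append.1 hchain).2.2 _ (List.getLast_mem_getLast? hne) x rfl
  exact notMem_of_adj_notMem_closedNeighborhood hadj.symm (hl₁ _ (List.getLast_mem hne))

variable [DecidablePred (· ∈ closedNeighborhood H S)]

theorem isChain_filter_closedNeighborhood (hle : H ≤ G) (hclique : G.IsClique Sᶜ) {l : List V}
    (hchain : l.IsChain H.Adj) (hnodup : (l.filter (· ∈ closedNeighborhood H S)).Nodup) :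
    (l.filter (· ∈ closedNeighborhood H S)).IsChain G.Adj := by
  rw [List.isChain_iff_forall_rel_of_append_cons_cons]
  intro a b l₁ l₂ hfilter
  have hab : a ≠ b := by
    rintro rfl
    simp [hfilter, List.nodup_append] at hnodup
  obtain ⟨k₁, k₂, rfl, -, hfilter⟩ := List.filter_eq_append_iff.1 hfilter
  obtain ⟨k₃, k₄, rfl, -, -, hfilter⟩ := List.filter_eq_cons_iff.1 hfilter
  obtain ⟨d, k₅, rfl, hdropped, -, -⟩ := List.filter_eq_cons_iff.1 hfilter
  replace hdropped : ∀ y ∈ d, y ∉ closedNeighborhood H S := by simpa using hdropped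
  have hchain : (a :: (d ++ b :: k₅)).IsChain H.Adj := hchain.right_of_append.right_of_append
  cases d with
  | nil => exact hle (List.isChain_cons_cons.1 hchain).1
  | cons y d =>
    obtain ⟨hay, hchain⟩ := List.isChain_cons_cons.1 hchain
    exact hclique
      (notMem_of_adj_notMem_closedNeighborhood hay (hdropped y List.mem_cons_self))
      (notMem_of_isChain_append_cons hchain (List.cons_ne_nil y d) hdropped) hab

theorem head_filter_closedNeighborhood_notMem (w : H.Walk u v) (hu : u ∉ closedNeighborhood H S)
    (hne : w.support.filter (· ∈ closedNeighborhood H S) ≠ []) :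
    (w.support.filter (· ∈ closedNeighborhood H S)).head hne ∉ S := by
  obtain ⟨x, l, hfilter⟩ := List.exists_cons_of_ne_nil hne
  obtain ⟨d, k, hsupport, hdropped, hx, -⟩ := List.filter_eq_cons_iff.1 hfilter
  have hd : d ≠ [] := by
    rintro rfl
    obtain rfl : u = x := (List.cons.inj (w.cons_tail_support.trans hsupport)).1
    exact hu (of_decide_eq_true hx)
  simpa [hfilter] using notMem_of_isChain_append_cons (hsupport ▸ w.isChain_adj_support) hd
    (by simpa using hdropped)

theorem getLast_filter_closedNeighborhood_notMem (w : H.Walk u v)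
    (hv : v ∉ closedNeighborhood H S)
    (hne : w.support.filter (· ∈ closedNeighborhood H S) ≠ []) :
    (w.support.filter (· ∈ closedNeighborhood H S)).getLast hne ∉ S := by
  have hhead := head_filter_closedNeighborhood_notMem w.reverse hv
  simp only [SimpleGraph.Walk.support_reverse, List.filter_reverse, List.head_reverse] at hhead
  exact hhead (by simpa using hne)

end ClosedNeighborhood

section VertexSets

variable {V : Type*} {G : SimpleGraph V} {p : Finset V} {C U : Set V}

/-- `p` is the vertex set of a cycle of `G`, where a single vertex is a trivial cycle. -/
def IsCycleVertexSet (G : SimpleGraph V) (p : Finset V) : Prop :=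
  (∃ x, p = {x}) ∨ ∃ a : V, ∃ c : G.Walk a a, c.IsCycle ∧ ∀ x, x ∈ p ↔ x ∈ c.support

/-- `p` is the vertex set of a path of `G` with both endpoints in `C`. -/
def IsPathVertexSet (G : SimpleGraph V) (C : Set V) (p : Finset V) : Prop :=
  ∃ a b : V, ∃ w : G.Walk a b, w.IsPath ∧ (∀ x, x ∈ p ↔ x ∈ w.support) ∧ a ∈ C ∧ b ∈ C

theorem IsCycleVertexSet.induce [DecidablePred (· ∈ U)] (hp : IsCycleVertexSet G p)
    (hU : ↑p ⊆ U) : IsCycleVertexSet (G.induce U) (p.subtype (· ∈ U)) := by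
  rcases hp with ⟨x, rfl⟩ | ⟨a, c, hc, hsupport⟩
  · exact Or.inl ⟨⟨x, hU (by simp)⟩, by ext; simp [Subtype.ext_iff]⟩
  · have hcU : ∀ x ∈ c.support, x ∈ U := fun x hx => hU ((hsupport x).2 hx)
    refine Or.inr ⟨_, c.induce U hcU, ?_, fun x => by simp [hsupport]⟩
    apply SimpleGraph.Walk.IsCycle.of_map (f := (SimpleGraph.Embedding.induce U).toHom)
    rwa [SimpleGraph.Walk.map_induce]

theorem IsPathVertexSet.induce [DecidablePred (· ∈ U)] (hp : IsPathVertexSet G C p)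
    (hU : ↑p ⊆ U) :
    IsPathVertexSet (G.induce U) (Subtype.val ⁻¹' C) (p.subtype (· ∈ U)) := by
  obtain ⟨a, b, w, hw, hsupport, ha, hb⟩ := hp
  have hwU : ∀ x ∈ w.support, x ∈ U := fun x hx => hU ((hsupport x).2 hx)
  refine ⟨_, _, w.induce U hwU, ?_, fun x => by simp [hsupport], ha, hb⟩
  apply SimpleGraph.Walk.IsPath.of_map (f := (SimpleGraph.Embedding.induce U).toHom)
  rwa [SimpleGraph.Walk.map_induce]

theorem isPathVertexSet_toFinset [DecidableEq V] {l : List V} (hne : l ≠ [])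
    (hchain : l.IsChain G.Adj) (hnodup : l.Nodup) (hhead : l.head hne ∈ C)
    (hlast : l.getLast hne ∈ C) : IsPathVertexSet G C l.toFinset :=
  ⟨_, _, SimpleGraph.Walk.ofSupport l hne hchain,
    by rwa [SimpleGraph.Walk.isPath_def, SimpleGraph.Walk.support_ofSupport],
    by simp, hhead, hlast⟩

end VertexSets

section Pruning

open scoped Finset

variable {V : Type*} {G H : SimpleGraph V} {S p : Finset V} {a : V}

theorem card_filter_adj_toSubgraph_le_two {c : G.Walk a a} [DecidableRel c.toSubgraph.Adj]
    (hc : c.IsCycle) {v : V} (hv : v ∈ c.support) : #{x ∈ p | c.toSubgraph.Adj v x} ≤ 2 := by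
  rw [← hc.ncard_neighborSet_toSubgraph_eq_two hv, ← Set.ncard_coe_finset]
  refine Set.ncard_le_ncard (fun x hx => (Finset.mem_filter.1 hx).2) ?_
  exact Set.finite_of_ncard_ne_zero (by simp [hc.ncard_neighborSet_toSubgraph_eq_two hv])

variable [DecidableEq V]

theorem isPathVertexSet_filter_closedNeighborhood
    [DecidablePred (· ∈ closedNeighborhood H (S : Set V))]
    (hle : H ≤ G) (hclique : G.IsClique (S : Set V)ᶜ) {c : H.Walk a a} (hc : c.IsCycle)
    (hsupport : ∀ x, x ∈ p ↔ x ∈ c.support) (hmeet : (p ∩ S).Nonempty)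
    (hp : ¬ (p : Set V) ⊆ closedNeighborhood H S) :
    IsPathVertexSet G (S : Set V)ᶜ {v ∈ p | v ∈ closedNeighborhood H S} := by
  obtain ⟨z, hzp, hz⟩ := Set.not_subset.1 hp
  have hzc := (hsupport z).1 hzp
  set w := c.rotate z hzc
  set l := w.support.filter (· ∈ closedNeighborhood H (S : Set V)) with hl
  have hnodup : l.Nodup := by
    rw [hl, ← w.cons_tail_support, List.filter_cons_of_neg (by simpa using hz)]
    exact (hc.rotate hzc).support_nodup.filter _
  have hmem : ∀ x, x ∈ l ↔ x ∈ p ∧ x ∈ closedNeighborhood H (S : Set V) := by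
    simp [l, w, hsupport, SimpleGraph.Walk.mem_support_rotate_iff]
  have hne : l ≠ [] := by
    obtain ⟨s, hs⟩ := hmeet
    rw [Finset.mem_inter] at hs
    exact List.ne_nil_of_mem ((hmem s).2 ⟨hs.1, Or.inl hs.2⟩)
  have hl_toFinset : l.toFinset = {v ∈ p | v ∈ closedNeighborhood H S} := by ext; simp [hmem]
  rw [← hl_toFinset]
  exact isPathVertexSet_toFinset hne
    (isChain_filter_closedNeighborhood hle hclique w.isChain_adj_support hnodup) hnodup
    (head_filter_closedNeighborhood_notMem w hz hne)
    (getLast_filter_closedNeighborhood_notMem w hz hne)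

theorem card_filter_closedNeighborhood_sdiff_le
    [DecidablePred (· ∈ closedNeighborhood H (S : Set V))] [DecidableRel H.Adj] {d : ℕ}
    (hadj : ∀ u v, H.Adj u v → u ∈ p) (hdeg : ∀ s ∈ p, #{v ∈ p | H.Adj s v} ≤ d) :
    #({v ∈ p | v ∈ closedNeighborhood H S} \ S) ≤ d * #(p ∩ S) := by
  have hsub : {v ∈ p | v ∈ closedNeighborhood H S} \ S ⊆
      (p ∩ S).biUnion fun s => {v ∈ p | H.Adj s v} := by
    intro v hv
    simp only [Finset.mem_sdiff, Finset.mem_filter] at hv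
    obtain ⟨⟨hvp, hvS | ⟨s, hs, hsv⟩⟩, hvS'⟩ := hv
    · exact absurd hvS hvS'
    · exact Finset.mem_biUnion.2
        ⟨s, Finset.mem_inter.2 ⟨hadj s v hsv, hs⟩, Finset.mem_filter.2 ⟨hvp, hsv⟩⟩
  calc _ ≤ _ := Finset.card_le_card hsub
    _ ≤ #(p ∩ S) * d := Finset.card_biUnion_le_card_mul _ _ _ fun s hs =>
        hdeg s (Finset.mem_inter.1 hs).1
    _ = d * #(p ∩ S) := mul_comm _ _

theorem exists_isPathVertexSet_of_isCycle (hclique : G.IsClique (S : Set V)ᶜ) {c : G.Walk a a}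
    (hc : c.IsCycle) (hsupport : ∀ x, x ∈ p ↔ x ∈ c.support) (hmeet : (p ∩ S).Nonempty)
    (hheavy : 2 * #(p ∩ S) < #(p \ S)) :
    ∃ q ⊆ p, p ∩ S ⊆ q ∧ #(q \ S) ≤ 2 * #(p ∩ S) ∧ IsPathVertexSet G (S : Set V)ᶜ q := by
  classical
  let H := c.toSubgraph.spanningCoe
  have hcard : #({v ∈ p | v ∈ closedNeighborhood H S} \ S) ≤ 2 * #(p ∩ S) := by
    refine card_filter_closedNeighborhood_sdiff_le (fun u v huv => ?_) fun s hs => ?_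
    · exact (hsupport u).2 (c.mem_verts_toSubgraph.1 (c.toSubgraph.edge_vert huv))
    · exact card_filter_adj_toSubgraph_le_two hc ((hsupport s).1 hs)
  have hcut : ¬ (p : Set V) ⊆ closedNeighborhood H S := fun hsub => by
    rw [Finset.filter_true_of_mem hsub] at hcard
    omega
  have hedges : ∀ e ∈ c.edges, e ∈ H.edgeSet := fun e he => by
    simpa [H] using he
  refine ⟨_, Finset.filter_subset _ p, fun v hv => ?_, hcard,
    isPathVertexSet_filter_closedNeighborhood c.toSubgraph.spanningCoe_le hclique
      (hc.transfer hedges) (by simpa using hsupport) hmeet hcut⟩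
  rw [Finset.mem_inter] at hv
  exact Finset.mem_filter.2 ⟨hv.1, Or.inl hv.2⟩

theorem IsCycleVertexSet.exists_pruned (hp : IsCycleVertexSet G p)
    (hclique : G.IsClique (S : Set V)ᶜ) (hmeet : (p ∩ S).Nonempty) :
    ∃ q ⊆ p, p ∩ S ⊆ q ∧ #(q \ S) ≤ 2 * #(p ∩ S) ∧
      (#(p \ S) ≤ 2 * #(p ∩ S) → IsCycleVertexSet G q) ∧
      (2 * #(p ∩ S) < #(p \ S) → IsPathVertexSet G (S : Set V)ᶜ q) := by
  rcases le_or_gt #(p \ S) (2 * #(p ∩ S)) with hlight | hheavy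
  · exact ⟨p, subset_rfl, Finset.inter_subset_left, hlight, fun _ => hp,
      fun hheavy => absurd hlight hheavy.not_ge⟩
  rcases hp with ⟨x, rfl⟩ | ⟨a, c, hc, hsupport⟩
  · have hpos := hmeet.card_pos
    have hle : #({x} \ S) ≤ 1 := Finset.card_le_card Finset.sdiff_subset
    omega
  · obtain ⟨q, hqp, hSq, hcard, hpath⟩ :=
      exists_isPathVertexSet_of_isCycle hclique hc hsupport hmeet hheavy
    exact ⟨q, hqp, hSq, hcard, fun hlight => absurd hlight hheavy.not_ge, fun _ => hpath⟩

end Pruning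

section Covers

open scoped Finset

variable {V : Type*} {G : SimpleGraph V}

/-- `L` is a set of vertex-disjoint cycles and paths of `G` covering `S`, with the vertex sets of
the cycles collected in `Lc`, and with all endpoints of the remaining paths in `C`. This is
`HasCyclePathCover` with its two witnesses exposed. -/
structure IsCyclePathCover (G : SimpleGraph V) (S C : Set V) (L Lc : Finset (Finset V)) :
    Prop where
  subset : Lc ⊆ L
  pairwiseDisjoint : (L : Set (Finset V)).PairwiseDisjoint id
  covers : ∀ v ∈ S, ∃ p ∈ L, v ∈ p
  isCycleVertexSet : ∀ p ∈ Lc, IsCycleVertexSet G p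
  isPathVertexSet : ∀ p ∈ L, p ∉ Lc → IsPathVertexSet G C p

theorem IsCyclePathCover.hasCyclePathCover_induce {S C U : Set V} {L Lc : Finset (Finset V)}
    {m : ℕ} (hL : IsCyclePathCover G S C L Lc) (hU : ∀ p ∈ L, ↑p ⊆ U) (hm : #Lc ≤ m) :
    HasCyclePathCover (G.induce U) (Subtype.val ⁻¹' S) (Subtype.val ⁻¹' C) m := by
  classical
  refine ⟨L.image (Finset.subtype (· ∈ U)), Lc.image (Finset.subtype (· ∈ U)),
    Finset.image_subset_image hL.subset, ?disjoint, ?covers, ?cycles, ?paths,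
    Finset.card_image_le.trans hm⟩
  case disjoint =>
    simp only [Finset.forall_mem_image]
    intro p hp q hq hpq x hxp hxq
    have hpq : p ≠ q := fun h => hpq (h ▸ rfl)
    exact Finset.disjoint_left.1 (hL.pairwiseDisjoint hp hq hpq)
      (Finset.mem_subtype.1 hxp) (Finset.mem_subtype.1 hxq)
  case covers =>
    intro v hv
    obtain ⟨p, hp, hvp⟩ := hL.covers v hv
    exact ⟨_, Finset.mem_image_of_mem _ hp, Finset.mem_subtype.2 hvp⟩
  case cycles =>
    simp only [Finset.forall_mem_image]
    exact fun p hp => (hL.isCycleVertexSet p hp).induce (hU p (hL.subset hp))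
  case paths =>
    simp only [Finset.forall_mem_image]
    intro p hp hpc
    exact (hL.isPathVertexSet p hp fun h => hpc (Finset.mem_image_of_mem _ h)).induce (hU p hp)

variable [DecidableEq V]

theorem isCyclePathCover_image {S C : Set V} {M N : Finset (Finset V)}
    {f : Finset V → Finset V} (hNM : N ⊆ M) (hdisj : (M : Set (Finset V)).PairwiseDisjoint f)
    (hcovers : ∀ v ∈ S, ∃ p ∈ M, v ∈ f p) (hcycle : ∀ p ∈ N, IsCycleVertexSet G (f p))
    (hpath : ∀ p ∈ M, p ∉ N → IsPathVertexSet G C (f p)) :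
    IsCyclePathCover G S C (M.image f) (N.image f) where
  subset := Finset.image_subset_image hNM
  pairwiseDisjoint := by
    rw [Finset.coe_image]
    rintro _ ⟨p, hp, rfl⟩ _ ⟨q, hq, rfl⟩ hpq
    exact hdisj hp hq fun h => hpq (congrArg f h)
  covers v hv := by simpa only [Finset.exists_mem_image] using hcovers v hv
  isCycleVertexSet := by simpa only [Finset.forall_mem_image] using hcycle
  isPathVertexSet := by
    simp only [Finset.forall_mem_image]
    exact fun p hp hpN => hpath p hp fun h => hpN (Finset.mem_image_of_mem f h)

variable {S : Finset V} {P : Finset (Finset V)}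

theorem sum_card_inter_of_existsUnique (hP : ∀ v ∈ S, ∃! p, p ∈ P ∧ v ∈ p) :
    ∑ p ∈ P, #(p ∩ S) = #S := by
  have hcount : ∀ v ∈ S, #{p ∈ P | v ∈ p} = 1 := fun v hv => by
    rw [Finset.card_eq_one_iff_existsUnique]
    simpa using hP v hv
  simpa [Finset.inter_comm] using Finset.sum_card_inter hcount

theorem exists_two_mul_card_inter_lt_card_sdiff [Fintype V] (hP : ∀ v, ∃! p, p ∈ P ∧ v ∈ p)
    (hbig : 2 * #S < #(Finset.univ \ S)) : ∃ p ∈ P, 2 * #(p ∩ S) < #(p \ S) := by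
  refine Finset.exists_lt_of_sum_lt ?_
  have hsdiff : ∀ p : Finset V, #(p ∩ (Finset.univ \ S)) = #(p \ S) := fun p => by
    congr 1; ext; simp
  simp only [← hsdiff, ← Finset.mul_sum]
  rwa [sum_card_inter_of_existsUnique fun v _ => hP v,
    sum_card_inter_of_existsUnique fun v _ => hP v]

theorem card_biUnion_sdiff_le {M : Finset (Finset V)} {f : Finset V → Finset V} {d : ℕ}
    (hP : ∀ v ∈ S, ∃! p, p ∈ P ∧ v ∈ p) (hMP : M ⊆ P)
    (hcard : ∀ p ∈ M, #(f p \ S) ≤ d * #(p ∩ S)) : #(M.biUnion fun p => f p \ S) ≤ d * #S :=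
  calc #(M.biUnion fun p => f p \ S)
    _ ≤ ∑ p ∈ M, #(f p \ S) := Finset.card_biUnion_le
    _ ≤ ∑ p ∈ M, d * #(p ∩ S) := Finset.sum_le_sum hcard
    _ ≤ ∑ p ∈ P, d * #(p ∩ S) := Finset.sum_le_sum_of_subset hMP
    _ = d * #S := by rw [← Finset.mul_sum, sum_card_inter_of_existsUnique hP]

theorem exists_isCyclePathCover (hclique : G.IsClique (S : Set V)ᶜ)
    (hP : ∀ v, ∃! p, p ∈ P ∧ v ∈ p) (hcycle : ∀ p ∈ P, IsCycleVertexSet G p)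
    (hheavy : ∃ p ∈ P, 2 * #(p ∩ S) < #(p \ S)) :
    ∃ L Lc, IsCyclePathCover G S (S : Set V)ᶜ L Lc ∧ #(L.biUnion (· \ S)) ≤ 2 * #S ∧
      #Lc < #P := by
  have hpruned := fun p hp hmeet => (hcycle p hp).exists_pruned hclique (S := S) hmeet
  choose! f hsub hinter hcard hlight hpath using hpruned
  let M := {p ∈ P | (p ∩ S).Nonempty}
  have hMP : M ⊆ P := Finset.filter_subset _ P
  have hmeet : ∀ p ∈ M, (p ∩ S).Nonempty := fun p hp => (Finset.mem_filter.1 hp).2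
  let N := {p ∈ M | #(p \ S) ≤ 2 * #(p ∩ S)}
  have hNM : N ⊆ M := Finset.filter_subset _ M
  refine ⟨M.image f, N.image f, isCyclePathCover_image hNM ?disjoint ?covers ?cycles ?paths,
    ?card, ?fewer⟩
  case disjoint =>
    intro p hp q hq hpq
    refine Finset.disjoint_left.2 fun x hxp hxq => hpq ?_
    exact (hP x).unique ⟨hMP hp, hsub p (hMP hp) (hmeet p hp) hxp⟩
      ⟨hMP hq, hsub q (hMP hq) (hmeet q hq) hxq⟩
  case covers =>
    intro v hv
    obtain ⟨p, ⟨hp, hvp⟩, -⟩ := hP v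
    have hvS : v ∈ p ∩ S := Finset.mem_inter.2 ⟨hvp, hv⟩
    exact ⟨p, Finset.mem_filter.2 ⟨hp, v, hvS⟩, hinter p hp ⟨v, hvS⟩ hvS⟩
  case cycles =>
    exact fun p hp => hlight p (hMP (hNM hp)) (hmeet p (hNM hp)) (Finset.mem_filter.1 hp).2
  case paths =>
    exact fun p hp hpN => hpath p (hMP hp) (hmeet p hp)
      (lt_of_not_ge fun hpl => hpN (Finset.mem_filter.2 ⟨hp, hpl⟩))
  case card =>
    rw [Finset.image_biUnion]
    exact card_biUnion_sdiff_le (fun v _ => hP v) hMP fun p hp => hcard p (hMP hp) (hmeet p hp)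
  case fewer =>
    obtain ⟨p, hp, hpheavy⟩ := hheavy
    refine Finset.card_image_le.trans_lt (Finset.card_lt_card ?_)
    refine (Finset.ssubset_iff_of_subset (hNM.trans hMP)).2 ⟨p, hp, ?_⟩
    exact fun hpl => (Finset.mem_filter.1 hpl).2.not_gt hpheavy

end Covers

/-- If `S` is a nonempty co-vertex cover of `G`, `C = V(G) \ S` has `|C| > 2|S|`, and `G` has
a cycle cover of size at most `r`, then there is `C' ⊆ C` with `|C'| ≤ 2|S|` such that the
induced subgraph `G' = G[S ∪ C']` admits a cycle-path cover of `S` in `G'` with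
`C'`-endpoints containing at most `r - 1` cycles. -/
theorem stmt11 {V : Type*} [Fintype V] [DecidableEq V] (G : SimpleGraph V)
    (S : Finset V) (hS : S.Nonempty)
    (hclique : ∀ u v : V, u ∉ S → v ∉ S → u ≠ v → G.Adj u v)
    (hbig : 2 * S.card < (Finset.univ \ S).card)
    (r : ℕ) (h : HasCycleCoverLE G r) :
    ∃ C' : Finset V, Disjoint C' S ∧ C'.card ≤ 2 * S.card ∧
      HasCyclePathCover (G.induce (↑(S ∪ C') : Set V))
        {x : (↑(S ∪ C') : Set V) | (x : V) ∈ S}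
        {x : (↑(S ∪ C') : Set V) | (x : V) ∈ C'} (r - 1) := by
  obtain ⟨P, hPr, hP, hcycle⟩ := h
  obtain ⟨L, Lc, hL, hcard, hLc⟩ := exists_isCyclePathCover
    (fun u hu v hv huv => hclique u v hu hv huv) hP hcycle
    (exists_two_mul_card_inter_lt_card_sdiff hP hbig)
  set C' := L.biUnion (· \ S)
  have hdisj : Disjoint C' S :=
    (Finset.disjoint_biUnion_left ..).2 fun p _ => Finset.sdiff_disjoint
  refine ⟨C', hdisj, hcard, ?_⟩
  have hU : ∀ p ∈ L, (p : Set V) ⊆ ↑(S ∪ C') := fun p hp => by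
    rw [Finset.coe_subset]
    refine sdiff_le_iff.1 ?_
    exact Finset.subset_biUnion_of_mem (· \ S) hp
  have hendpoints : {x : (↑(S ∪ C') : Set V) | (x : V) ∈ C'} = Subtype.val ⁻¹' (S : Set V)ᶜ := by
    ext ⟨x, hx⟩
    have hx : x ∈ S ∨ x ∈ C' := by simpa only [Finset.mem_coe, Finset.mem_union] using hx
    exact ⟨fun hxC => Finset.disjoint_left.1 hdisj hxC, hx.resolve_left⟩
  rw [hendpoints]
  exact hL.hasCyclePathCover_induce hU (by omega)
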